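/- Let p be a prime, q = p^m, and let k = r ≥ 4 be an integer with p dividing r. Let a_0, a_1, …, a_r ∈ F_{q^r} with a_r ≠ 0. Then the polynomial V_{r,r}(X_1,…,X_r) = −∏_{i=1}^r X_i + Σ_{u=1}^{r} Σ_{i=1}^{r} a_u^{q^{i-1}} X_i^u + T(a_0) is irreducible in F̄_q[X_1,…,X_r]; that is, the variety V_{r,r} is absolutely irreducible. -/

import Mathlib

open MvPolynomial

/-!
Suppose `V = g h` with neither factor constant. The leading forms `g₀`, `h₀` vanish at the
origin, so by Krull's height theorem some prime `P ∋ g₀, h₀` has height at most two. By the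
Leibniz rule `P` contains `F = g₀ h₀` and all its partial derivatives, that is, the zero set
of `P` lies in the singular locus of the leading form `F = -∏ X_i + ∑ c_i X_i ^ r` of `V`.
Since `r = 0` in the field, the powers disappear from the derivatives and
`∂F/∂X_i = -∏_{j ≠ i} X_j`; hence `P` contains two variables `X_i`, `X_j`. Modulo these `F` is
a nonzero sum of powers of the remaining variables, so `P` strictly contains `(X_i, X_j)` and
has height at least three, a contradiction.
-/

variable {σ R K : Type*}

section leadingForm

/-- The leading form of a polynomial: its homogeneous component of top total degree
(and `0` for the zero polynomial). -/
noncomputable def leadingForm [CommSemiring R] (f : MvPolynomial σ R) : MvPolynomial σ R :=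
  homogeneousComponent f.totalDegree f

lemma coeff_leadingForm [CommSemiring R] (f : MvPolynomial σ R) (d : σ →₀ ℕ) :
    coeff d (leadingForm f) = if d.degree = f.totalDegree then coeff d f else 0 :=
  coeff_homogeneousComponent _ _ _

lemma leadingForm_add_of_isHomogeneous [CommSemiring R] {f g : MvPolynomial σ R} {n : ℕ}
    (hf : f.IsHomogeneous n) (hf0 : f ≠ 0) (hg : g.totalDegree < n) :
    leadingForm (f + g) = f := by
  have hdeg : (f + g).totalDegree = n := by
    rw [totalDegree_add_eq_left_of_totalDegree_lt (by rwa [hf.totalDegree hf0]),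
      hf.totalDegree hf0]
  rw [leadingForm, hdeg, map_add, homogeneousComponent_eq_self hf,
    homogeneousComponent_eq_zero _ _ hg, add_zero]

lemma leadingForm_mul [CommSemiring R] [NoZeroDivisors R] (f g : MvPolynomial σ R) :
    leadingForm (f * g) = leadingForm f * leadingForm g := by
  classical
  rcases eq_or_ne f 0 with rfl | hf
  · simp [leadingForm]
  rcases eq_or_ne g 0 with rfl | hg
  · simp [leadingForm]
  ext d
  rw [coeff_leadingForm, totalDegree_mul_of_isDomain hf hg]
  split_ifs with hd
  · rw [coeff_mul, coeff_mul]
    refine Finset.sum_congr rfl fun ⟨d₁, d₂⟩ hsum ↦ ?_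
    have hdeg : d₁.degree + d₂.degree = f.totalDegree + g.totalDegree := by
      rw [← hd, ← Finset.HasAntidiagonal.mem_antidiagonal.1 hsum, map_add]
    rcases lt_trichotomy d₁.degree f.totalDegree with hlt | heq | hgt
    · have hg₂ : coeff d₂ g = 0 :=
        coeff_eq_zero_of_totalDegree_lt (show g.totalDegree < d₂.degree by omega)
      simp [coeff_leadingForm, hg₂]
    · simp [coeff_leadingForm, heq, show d₂.degree = g.totalDegree by omega]
    · simp [coeff_leadingForm, coeff_eq_zero_of_totalDegree_lt hgt]
  · exact (((homogeneousComponent_isHomogeneous _ f).mul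
      (homogeneousComponent_isHomogeneous _ g)).coeff_eq_zero hd).symm

lemma constantCoeff_leadingForm [CommSemiring R] {f : MvPolynomial σ R}
    (hf : f.totalDegree ≠ 0) : constantCoeff (leadingForm f) = 0 :=
  (homogeneousComponent_isHomogeneous _ f).coeff_eq_zero (by simpa using hf.symm)

end leadingForm

section SingularLocus

lemma totalDegree_ne_zero_of_not_isUnit [Field K] {f : MvPolynomial σ K} (hf0 : f ≠ 0)
    (hf : ¬IsUnit f) : f.totalDegree ≠ 0 := by
  intro h
  rw [totalDegree_eq_zero_iff_eq_C] at h
  exact hf (h ▸ (IsUnit.mk0 _ fun h0 ↦ hf0 (by rw [h, h0, C_0])).map C)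

lemma derivation_mul_mem_of_mem {A : Type*} [CommSemiring R] [CommRing A] [Algebra R A]
    (D : Derivation R A A) {I : Ideal A} {f g : A} (hf : f ∈ I) (hg : g ∈ I) : D (f * g) ∈ I := by
  rw [D.leibniz]
  exact I.add_mem (I.mul_mem_right _ hf) (I.mul_mem_right _ hg)

lemma exists_isPrime_height_le_two_of_span_pair_ne_top [CommRing R] [IsNoetherianRing R]
    {f g : R} (hfg : Ideal.span {f, g} ≠ ⊤) :
    ∃ P : Ideal R, P.IsPrime ∧ f ∈ P ∧ g ∈ P ∧ P.height ≤ 2 := by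
  obtain ⟨P, hP⟩ := Ideal.nonempty_minimalPrimes hfg
  have hheight : P.height ≤ ({f, g} : Set R).ncard :=
    Ideal.height_le_card_of_mem_minimalPrimes_span (Set.toFinite _) hP
  have hcard : ({f, g} : Set R).ncard ≤ 2 :=
    (Set.ncard_insert_le f {g}).trans (by rw [Set.ncard_singleton])
  exact ⟨P, hP.1.1, hP.1.2 (Ideal.subset_span (by simp)), hP.1.2 (Ideal.subset_span (by simp)),
    hheight.trans (by exact_mod_cast hcard)⟩

theorem irreducible_of_three_le_height_singular_leadingForm [Finite σ] [Field K]
    {f : MvPolynomial σ K} (hf : f.totalDegree ≠ 0)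
    (hsing : ∀ P : Ideal (MvPolynomial σ K), P.IsPrime → leadingForm f ∈ P →
      (∀ i, pderiv i (leadingForm f) ∈ P) → 3 ≤ P.height) :
    Irreducible f := by
  refine ⟨fun hu ↦ hf (isUnit_iff_totalDegree_of_isReduced.1 hu).2, fun g h hgh ↦ ?_⟩
  by_contra! hunit
  have hgh0 : g * h ≠ 0 := fun h0 ↦ hf (by rw [hgh, h0, totalDegree_zero])
  have hg : g.totalDegree ≠ 0 :=
    totalDegree_ne_zero_of_not_isUnit (left_ne_zero_of_mul hgh0) hunit.1
  have hh : h.totalDegree ≠ 0 :=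
    totalDegree_ne_zero_of_not_isUnit (right_ne_zero_of_mul hgh0) hunit.2
  have hspan : Ideal.span {leadingForm g, leadingForm h} ≠ ⊤ :=
    ne_top_of_le_ne_top (RingHom.ker_ne_top (constantCoeff (R := K) (σ := σ)))
      (Ideal.span_le.2 (Set.pair_subset (constantCoeff_leadingForm hg)
        (constantCoeff_leadingForm hh)))
  obtain ⟨P, hP, hgP, hhP, hheight⟩ := exists_isPrime_height_le_two_of_span_pair_ne_top hspan
  have hlead : leadingForm f = leadingForm g * leadingForm h := by rw [hgh, leadingForm_mul]
  have hthree : 3 ≤ P.height :=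
    hsing P hP (hlead ▸ P.mul_mem_right _ hgP)
      fun i ↦ hlead ▸ derivation_mul_mem_of_mem _ hgP hhP
  exact absurd (hthree.trans hheight) (by decide)

end SingularLocus

section SpanX

variable [CommRing R] [IsDomain R]

lemma isPrime_span_X_image (s : Set σ) :
    (Ideal.span (X '' s : Set (MvPolynomial σ R))).IsPrime := by
  classical
  set I : Ideal (MvPolynomial σ R) := Ideal.span (X '' s)
  let kill : MvPolynomial σ R →ₐ[R] MvPolynomial σ R := aeval fun i ↦ if i ∈ s then 0 else X i
  have hkill : (Ideal.Quotient.mkₐ R I).comp kill = Ideal.Quotient.mkₐ R I := by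
    ext i
    by_cases hi : i ∈ s
    · have hXi : X i ∈ I := Ideal.subset_span (Set.mem_image_of_mem X hi)
      simpa [kill, hi] using (Ideal.Quotient.eq_zero_iff_mem.2 hXi).symm
    · simp [kill, hi]
  have hker : RingHom.ker kill = I := by
    refine le_antisymm (fun f hf ↦ ?_) (Ideal.span_le.2 ?_)
    · rw [← Ideal.Quotient.eq_zero_iff_mem, ← Ideal.Quotient.mkₐ_eq_mk R, ← hkill,
        AlgHom.comp_apply, RingHom.mem_ker.1 hf, map_zero]
    · rintro _ ⟨i, hi, rfl⟩
      simp [kill, hi]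
  exact hker ▸ RingHom.ker_isPrime kill

lemma card_le_height_span_X_image (s : Finset σ) :
    (s.card : ℕ∞) ≤ (Ideal.span (X '' (s : Set σ) : Set (MvPolynomial σ R))).height := by
  classical
  induction s using Finset.induction_on with
  | empty => simp
  | insert i s hi ih =>
    have := isPrime_span_X_image (R := R) (s : Set σ)
    have := isPrime_span_X_image (R := R) ((insert i s : Finset σ) : Set σ)
    have hlt : Ideal.span (X '' (s : Set σ) : Set (MvPolynomial σ R)) <
        Ideal.span (X '' (insert i s : Finset σ)) := by
      refine lt_of_le_not_ge (Ideal.span_mono (Set.image_mono (by simp))) fun hle ↦ ?_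
      have hX : X i ∈ Ideal.span (X '' (s : Set σ) : Set (MvPolynomial σ R)) :=
        hle (Ideal.subset_span ⟨i, by simp, rfl⟩)
      obtain ⟨j, hj, hij⟩ := mem_ideal_span_X_image.1 hX (Finsupp.single i 1) (by simp)
      exact hi ((Finsupp.single_apply_ne_zero.1 hij).1 ▸ hj)
    rw [Finset.card_insert_of_notMem hi, Nat.cast_add_one]
    exact (add_le_add_left ih 1).trans (Ideal.height_add_one_le_of_lt_of_isPrime hlt)

end SpanX

section prodPowForm

variable [Fintype σ]

/-- The form `-∏ X_i + ∑ c_i X_i ^ r` in `r` variables, where `r` is the cardinality of the index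
type `σ`. It is the leading form of the polynomial `V_{r,r}`. -/
noncomputable def prodPowForm [CommRing R] (c : σ → R) : MvPolynomial σ R :=
  -(∏ i, X i) + ∑ i, C (c i) * X i ^ Fintype.card σ

lemma isHomogeneous_prodPowForm [CommRing R] (c : σ → R) :
    (prodPowForm c).IsHomogeneous (Fintype.card σ) := by
  refine .add (.neg ?_) (.sum _ _ _ fun i _ ↦ isHomogeneous_C_mul_X_pow _ _ _)
  simpa using
    IsHomogeneous.prod Finset.univ (X : σ → MvPolynomial σ R) 1 fun i _ ↦ isHomogeneous_X R i

lemma eval_single_prodPowForm [DecidableEq σ] [Nontrivial σ] [CommRing R] (c : σ → R) (k : σ) :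
    eval (Pi.single k 1) (prodPowForm c) = c k := by
  obtain ⟨i, hik⟩ := exists_ne k
  have hprod : ∏ j, (if j = k then 1 else 0 : R) = 0 :=
    Finset.prod_eq_zero (Finset.mem_univ i) (if_neg hik)
  simp [prodPowForm, Pi.single_apply, ite_pow, hprod]

lemma pderiv_prodPowForm [DecidableEq σ] [CommRing R] (hcard : (Fintype.card σ : R) = 0)
    (c : σ → R) (i : σ) :
    pderiv i (prodPowForm c) = -∏ j ∈ Finset.univ.erase i, X j := by
  have hcardC : (Fintype.card σ : MvPolynomial σ R) = 0 := by
    rw [← map_natCast C, hcard, C_0]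
  have herase : pderiv i (∏ j ∈ Finset.univ.erase i, X j : MvPolynomial σ R) = 0 := by
    refine Finset.prod_induction _ (fun f ↦ pderiv i f = 0) (fun f g hf hg ↦ ?_) pderiv_one
      fun j hj ↦ pderiv_X_of_ne (Finset.ne_of_mem_erase hj)
    rw [pderiv_mul, hf, hg, zero_mul, mul_zero, add_zero]
  rw [prodPowForm, ← Finset.mul_prod_erase _ _ (Finset.mem_univ i)]
  simp [hcardC, herase]

lemma exists_ne_X_mem_of_forall_prod_erase_mem [DecidableEq σ] [Nonempty σ] [CommRing R]
    {P : Ideal (MvPolynomial σ R)} [P.IsPrime]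
    (h : ∀ i, ∏ j ∈ Finset.univ.erase i, X j ∈ P) : ∃ i j, i ≠ j ∧ X i ∈ P ∧ X j ∈ P := by
  obtain ⟨i, -, hi⟩ := Ideal.IsPrime.prod_mem_iff.1 (h (Classical.arbitrary σ))
  obtain ⟨j, hj, hjP⟩ := Ideal.IsPrime.prod_mem_iff.1 (h i)
  exact ⟨i, j, (Finset.ne_of_mem_erase hj).symm, hi, hjP⟩

lemma prodPowForm_notMem_span_pair [CommRing R] (hσ : 3 ≤ Fintype.card σ) {c : σ → R}
    (hc : ∀ i, c i ≠ 0) (i j : σ) : prodPowForm c ∉ Ideal.span {X i, X j} := by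
  classical
  have : Nontrivial σ := Fintype.one_lt_card_iff_nontrivial.1 (by omega)
  obtain ⟨k, -, hk⟩ : ∃ k ∈ Finset.univ, k ∉ ({i, j} : Finset σ) :=
    Finset.exists_mem_notMem_of_card_lt_card (Finset.card_le_two.trans_lt hσ)
  have hspan : Ideal.span {X i, X j} ≤ RingHom.ker (eval (Pi.single k 1 : σ → R)) := by
    rw [Ideal.span_le]
    rintro _ (rfl | rfl) <;> simp_all [eq_comm]
  exact fun hmem ↦ hc k (eval_single_prodPowForm c k ▸ hspan hmem)

lemma three_le_height_of_prodPowForm_mem [CommRing R] [IsDomain R] (hσ : 3 ≤ Fintype.card σ)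
    (hcard : (Fintype.card σ : R) = 0) {c : σ → R} (hc : ∀ i, c i ≠ 0)
    {P : Ideal (MvPolynomial σ R)} [P.IsPrime] (hmem : prodPowForm c ∈ P)
    (hderiv : ∀ i, pderiv i (prodPowForm c) ∈ P) : 3 ≤ P.height := by
  classical
  have : Nonempty σ := Fintype.card_pos_iff.1 (by omega)
  obtain ⟨i, j, hij, hi, hj⟩ : ∃ i j, i ≠ j ∧ X i ∈ P ∧ X j ∈ P :=
    exists_ne_X_mem_of_forall_prod_erase_mem fun i ↦ by
      simpa [pderiv_prodPowForm hcard] using hderiv i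
  have hle : Ideal.span {X i, X j} ≤ P := Ideal.span_le.2 (Set.pair_subset hi hj)
  have hlt : Ideal.span {X i, X j} < P :=
    SetLike.lt_iff_le_and_exists.2 ⟨hle, _, hmem, prodPowForm_notMem_span_pair hσ hc i j⟩
  have hprime : (Ideal.span {X i, X j} : Ideal (MvPolynomial σ R)).IsPrime := by
    simpa [Set.image_pair] using isPrime_span_X_image (R := R) {i, j}
  have htwo : 2 ≤ (Ideal.span {X i, X j} : Ideal (MvPolynomial σ R)).height := by
    simpa [Set.image_pair, Finset.card_pair hij] using
      card_le_height_span_X_image (R := R) {i, j}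
  calc (3 : ℕ∞) = 2 + 1 := by norm_num
    _ ≤ (Ideal.span {X i, X j} : Ideal (MvPolynomial σ R)).height + 1 := by gcongr
    _ ≤ P.height := Ideal.height_add_one_le_of_lt_of_isPrime hlt

theorem irreducible_prodPowForm_add [Field K] (hσ : 3 ≤ Fintype.card σ)
    (hcard : (Fintype.card σ : K) = 0) {c : σ → K} (hc : ∀ i, c i ≠ 0) {g : MvPolynomial σ K}
    (hg : g.totalDegree < Fintype.card σ) : Irreducible (prodPowForm c + g) := by
  have hform0 : prodPowForm c ≠ 0 := by
    obtain ⟨i⟩ : Nonempty σ := Fintype.card_pos_iff.1 (by omega)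
    exact ne_of_mem_of_not_mem (zero_mem _) (prodPowForm_notMem_span_pair hσ hc i i) |>.symm
  have hform : (prodPowForm c).totalDegree = Fintype.card σ :=
    (isHomogeneous_prodPowForm c).totalDegree hform0
  have hlead : leadingForm (prodPowForm c + g) = prodPowForm c :=
    leadingForm_add_of_isHomogeneous (isHomogeneous_prodPowForm c) hform0 hg
  refine irreducible_of_three_le_height_singular_leadingForm ?_ fun P hP hmem hderiv ↦ ?_
  · rw [totalDegree_add_eq_left_of_totalDegree_lt (hform ▸ hg), hform]
    omega
  · rw [hlead] at hmem hderiv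
    exact three_le_height_of_prodPowForm_mem hσ hcard hc hmem hderiv

end prodPowForm

lemma totalDegree_sum_Ico_sum_C_mul_X_pow_add_C_lt [Fintype σ] [CommSemiring R] {n : ℕ}
    (hn : 0 < n) (b : ℕ → σ → R) (b₀ : R) :
    (∑ u ∈ Finset.Ico 1 n, ∑ i, C (b u i) * X i ^ u + C b₀).totalDegree < n := by
  refine (totalDegree_add _ _).trans_lt (max_lt ?_ (by rwa [totalDegree_C]))
  refine (totalDegree_finsetSum _ _).trans_lt ((Finset.sup_lt_iff hn).2 fun u hu ↦ ?_)
  have hhom : (∑ i, C (b u i) * X i ^ u : MvPolynomial σ R).IsHomogeneous u :=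
    .sum _ _ _ fun i _ ↦ isHomogeneous_C_mul_X_pow _ _ _
  exact hhom.totalDegree_le.trans_lt (Finset.mem_Ico.1 hu).2

theorem stmt_6_general [Fintype σ] [Field K] (hσ : 3 ≤ Fintype.card σ)
    (hcard : (Fintype.card σ : K) = 0) (b : ℕ → σ → K) (hb : ∀ i, b (Fintype.card σ) i ≠ 0)
    (b₀ : K) :
    Irreducible
      (-(∏ i, X i) + (∑ u ∈ Finset.Icc 1 (Fintype.card σ), ∑ i, C (b u i) * X i ^ u) +
        C b₀ : MvPolynomial σ K) := by
  have hpos : 0 < Fintype.card σ := by omega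
  convert irreducible_prodPowForm_add hσ hcard hb
    (totalDegree_sum_Ico_sum_C_mul_X_pow_add_C_lt hpos b b₀) using 1
  rw [← Finset.sum_Ico_add_eq_sum_Icc hpos, prodPowForm]
  ring

/-- For `k = r ≥ 4` and `p ∣ r`, the polynomial
`V_{r,r} = -∏ X_i + ∑_{u=1}^r ∑_{i=1}^r a_u^{q^{i-1}} X_i^u + T(a_0)`
with coefficients `a_u ∈ F_{q^r}` and `a_r ≠ 0` is absolutely irreducible. -/
theorem stmt_6 (p m q r : ℕ) (hp : p.Prime) (hm : 0 < m) (hq : q = p ^ m)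
    (hr : 4 ≤ r) (hpr : p ∣ r)
    (K : Type) [Field K] [IsAlgClosed K] [CharP K p]
    (a : ℕ → K) (hmem : ∀ u ≤ r, a u ^ q ^ r = a u) (har : a r ≠ 0) :
    Irreducible
      (-(∏ i : Fin r, X i) +
        (∑ u ∈ Finset.Icc 1 r, ∑ i : Fin r, C (a u ^ q ^ (i : ℕ)) * X i ^ u) +
        C (∑ i ∈ Finset.range r, a 0 ^ q ^ i) : MvPolynomial (Fin r) K) := by
  have hrK : (r : K) = 0 := (CharP.cast_eq_zero_iff K p r).2 hpr
  simpa using stmt_6_general (σ := Fin r) (by simp; omega) (by simpa using hrK)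
    (fun u i ↦ a u ^ q ^ (i : ℕ)) (by simp [har]) (∑ i ∈ Finset.range r, a 0 ^ q ^ i)
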